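/- Let q be a positive squarefree integer. Suppose that (a) for every prime p with p ∣ q and p ∤ 2·disc(f), the reduction of f modulo p has a root in 𝔽_p, and (b) for every prime p dividing 2·disc(f), H_q is locally solvable at p. Then H_q is everywhere locally solvable: there exist x, y ∈ ℝ with q·y² = f(x), and H_q is locally solvable at every prime p. -/

import Mathlib

/-!
The theorem is local. Over `ℝ` a monic quartic is eventually positive, so `f x / q` has a square
root for large `x`. The primes dividing `2 * quarticDisc f` are covered by hypothesis, so only an
odd prime `p` at which `f` stays separable has to be treated.

* If `p ∣ q`, a root of `f` mod `p` is simple, so Hensel's lemma (`exists_padic_root`) lifts it to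
  a root in `ℤ_p`, which gives a point with `y = 0`.
* If `p ∤ q`, either `q` is a square mod `p`, hence in `ℚ_p`, or some `x` mod `p` has `f x` equal
  to zero or to a nonsquare (`exists_eval_zero_or_not_isSquare`). A zero lifts as before; if `f x`
  is a nonsquare, then `q * f x` is a nonzero square mod `p`, and its square root lifts to `ℚ_p`.

The existence of such an `x` is usually deduced from the Hasse bound. Here it follows
from an argument in the style of Stepanov. If every value of `f` is a nonzero square, then with
`D = X ^ p - X` there is a polynomial `g` with `f ^ ((p - 1) / 2) = 1 + D * g`. Differentiating and
using `(p - 1) / 2 = -1 / 2` in characteristic `p` gives `2 f g - f' = D h` with `deg h ≤ 2`, and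
differentiating again gives `D (f' h - 2 f h') = 2 f f'' - f' ^ 2 - 4 f h`. For `p ≥ 7` the right
side has degree less than `p`, so `f' h = 2 f h'`; hence `f ∣ h`, which forces `h = 0`, and then
`f ∣ f'`, which is absurd. For `p = 3` and `p = 5` the claim is a finite check.
-/

open Polynomial

/-- `H_q : q·y² = f(x)` is locally solvable at the prime `p`: either there is a solution
`(x, y)` in `ℚ_p`, or `q` is a square in `ℚ_p` (points at infinity). -/
def LocallySolvableAt (f : Polynomial ℤ) (q : ℤ) (p : ℕ) [Fact p.Prime] : Prop :=
  (∃ x y : ℚ_[p], (q : ℚ_[p]) * y ^ 2 = (f.map (Int.castRingHom ℚ_[p])).eval x) ∨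
    IsSquare ((q : ℚ_[p]))

/-- `H_q` is everywhere locally solvable: solvable over `ℝ` and locally solvable at
every prime `p`. -/
def EverywhereLocallySolvable (f : Polynomial ℤ) (q : ℤ) : Prop :=
  (∃ x y : ℝ, (q : ℝ) * y ^ 2 = (f.map (Int.castRingHom ℝ)).eval x) ∧
    ∀ (p : ℕ) [Fact p.Prime], LocallySolvableAt f q p

/-- The discriminant of a (monic) quartic polynomial `x⁴ + bx³ + cx² + dx + e`. -/
def quarticDisc (f : Polynomial ℤ) : ℤ :=
  let b := f.coeff 3
  let c := f.coeff 2
  let d := f.coeff 1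
  let e := f.coeff 0
  256 * e ^ 3 - 192 * b * d * e ^ 2 - 128 * c ^ 2 * e ^ 2 + 144 * c * d ^ 2 * e -
    27 * d ^ 4 + 144 * b ^ 2 * c * e ^ 2 - 6 * b ^ 2 * d ^ 2 * e - 80 * b * c ^ 2 * d * e +
    18 * b * c * d ^ 3 + 16 * c ^ 4 * e - 4 * c ^ 3 * d ^ 2 - 27 * b ^ 4 * e ^ 2 +
    18 * b ^ 3 * c * d * e - 4 * b ^ 3 * d ^ 3 - 4 * b ^ 2 * c ^ 3 * e +
    b ^ 2 * c ^ 2 * d ^ 2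

/-! ### The discriminant of a quartic -/

/-- The quartic discriminant is a combination of `f` and `f'`; the two cofactors are minors of
the Sylvester matrix of `f` and `f'`. -/
theorem quartic_bezout {R : Type*} [CommRing R] (b c d e x : R) :
    ((24 * b ^ 3 * d - 8 * b ^ 2 * c ^ 2 + 48 * b ^ 2 * e - 112 * b * c * d + 32 * c ^ 3
          - 128 * c * e + 144 * d ^ 2) * x ^ 2
        + (18 * b ^ 4 * d - 6 * b ^ 3 * c ^ 2 - 80 * b ^ 2 * c * d + 24 * b * c ^ 3
          + 32 * b * c * e + 120 * b * d ^ 2 - 16 * c ^ 2 * d - 192 * d * e) * x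
        + (- 27 * b ^ 4 * e + 15 * b ^ 3 * c * d - 4 * b ^ 2 * c ^ 3 + 144 * b ^ 2 * c * e
          + b ^ 2 * d ^ 2 - 68 * b * c ^ 2 * d - 176 * b * d * e + 16 * c ^ 4 - 128 * c ^ 2 * e
          + 96 * c * d ^ 2 + 256 * e ^ 2)) * (x ^ 4 + b * x ^ 3 + c * x ^ 2 + d * x + e)
      + ((- 6 * b ^ 3 * d + 2 * b ^ 2 * c ^ 2 - 12 * b ^ 2 * e + 28 * b * c * d - 8 * c ^ 3
          + 32 * c * e - 36 * d ^ 2) * x ^ 3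
        + (- 6 * b ^ 4 * d + 2 * b ^ 3 * c ^ 2 - 3 * b ^ 3 * e + 27 * b ^ 2 * c * d
          - 8 * b * c ^ 3 - 39 * b * d ^ 2 + 4 * c ^ 2 * d + 48 * d * e) * x ^ 2
        + (9 * b ^ 4 * e - 7 * b ^ 3 * c * d + 2 * b ^ 2 * c ^ 3 - 50 * b ^ 2 * c * e
          - b ^ 2 * d ^ 2 + 32 * b * c ^ 2 * d + 56 * b * d * e - 8 * c ^ 4 + 48 * c ^ 2 * e
          - 42 * c * d ^ 2 - 64 * e ^ 2) * x
        + (3 * b ^ 3 * c * e - 4 * b ^ 3 * d ^ 2 + b ^ 2 * c ^ 2 * d - 7 * b ^ 2 * d * e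
          - 12 * b * c ^ 2 * e + 18 * b * c * d ^ 2 - 16 * b * e ^ 2 - 4 * c ^ 3 * d
          + 48 * c * d * e - 27 * d ^ 3)) * (4 * x ^ 3 + 3 * b * x ^ 2 + 2 * c * x + d)
      = 256 * e ^ 3 - 192 * b * d * e ^ 2 - 128 * c ^ 2 * e ^ 2 + 144 * c * d ^ 2 * e -
        27 * d ^ 4 + 144 * b ^ 2 * c * e ^ 2 - 6 * b ^ 2 * d ^ 2 * e - 80 * b * c ^ 2 * d * e +
        18 * b * c * d ^ 3 + 16 * c ^ 4 * e - 4 * c ^ 3 * d ^ 2 - 27 * b ^ 4 * e ^ 2 +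
        18 * b ^ 3 * c * d * e - 4 * b ^ 3 * d ^ 3 - 4 * b ^ 2 * c ^ 3 * e +
        b ^ 2 * c ^ 2 * d ^ 2 := by
  ring

theorem eq_quartic {R : Type*} [CommRing R] {f : R[X]} (hm : f.Monic) (hdeg : f.natDegree = 4) :
    f = X ^ 4 + C (f.coeff 3) * X ^ 3 + C (f.coeff 2) * X ^ 2 + C (f.coeff 1) * X
      + C (f.coeff 0) := by
  have h4 : f.coeff 4 = 1 := by rw [← hdeg]; exact hm
  conv_lhs => rw [f.as_sum_range_C_mul_X_pow, hdeg]
  simp only [Finset.sum_range_succ, Finset.sum_range_zero, h4, map_one]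
  ring

theorem exists_bezout_map {f : ℤ[X]} (hm : f.Monic) (hdeg : f.natDegree = 4)
    {R : Type*} [CommRing R] :
    ∃ A B : R[X], A * f.map (Int.castRingHom R)
      + B * derivative (f.map (Int.castRingHom R)) = C (quarticDisc f : R) := by
  obtain ⟨b, hb⟩ : ∃ b, f.coeff 3 = b := ⟨_, rfl⟩
  obtain ⟨c, hc⟩ : ∃ b, f.coeff 2 = b := ⟨_, rfl⟩
  obtain ⟨d, hd⟩ : ∃ b, f.coeff 1 = b := ⟨_, rfl⟩
  obtain ⟨e, he⟩ : ∃ b, f.coeff 0 = b := ⟨_, rfl⟩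
  have hf := eq_quartic hm hdeg
  have hfm : f.map (Int.castRingHom R)
      = X ^ 4 + (b : R[X]) * X ^ 3 + (c : R[X]) * X ^ 2 + (d : R[X]) * X + (e : R[X]) := by
    rw [hf, hb, hc, hd, he]
    simp
  have hder : derivative (f.map (Int.castRingHom R))
      = 4 * X ^ 3 + 3 * (b : R[X]) * X ^ 2 + 2 * (c : R[X]) * X + (d : R[X]) := by
    rw [hfm]
    simp only [derivative_add, derivative_mul, derivative_intCast, derivative_X_pow, derivative_X,
      map_natCast]
    push_cast
    ring
  rw [hder, hfm]
  refine ⟨_, _, (quartic_bezout (b : R[X]) c d e X).trans ?_⟩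
  rw [map_intCast]
  simp only [quarticDisc, hb, hc, hd, he]
  push_cast
  rfl

theorem isCoprime_map_derivative {f : ℤ[X]} (hm : f.Monic) (hdeg : f.natDegree = 4)
    {K : Type*} [Field K] (hdisc : (quarticDisc f : K) ≠ 0) :
    IsCoprime (f.map (Int.castRingHom K)) (derivative (f.map (Int.castRingHom K))) := by
  obtain ⟨A, B, h⟩ := exists_bezout_map hm hdeg (R := K)
  refine ⟨C (quarticDisc f : K)⁻¹ * A, C (quarticDisc f : K)⁻¹ * B, ?_⟩
  rw [mul_assoc, mul_assoc, ← mul_add, h, ← C_mul, inv_mul_cancel₀ hdisc, C_1]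

/-! ### Values of a separable quartic over a prime field -/

/-- A polynomial whose `n`-th power is `1` at every point of `𝔽_p` has `n`-th power congruent to `1`
modulo `X ^ p - X`. -/
theorem exists_pow_eq_one_add_mul {p : ℕ} [Fact p.Prime] {f : (ZMod p)[X]} (n : ℕ)
    (hall : ∀ x, f.eval x ^ n = 1) :
    ∃ g : (ZMod p)[X], f ^ n = 1 + (X ^ p - X) * g := by
  have hp := (Fact.out : p.Prime)
  have hroots : (X ^ p - X : (ZMod p)[X]).roots = Finset.univ.val := by
    simpa using FiniteField.roots_X_pow_card_sub_X (ZMod p)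
  have hsplit : (X ^ p - X : (ZMod p)[X]).Splits := by
    rw [splits_iff_card_roots, hroots, FiniteField.X_pow_card_sub_X_natDegree_eq _ hp.one_lt]
    simp
  by_cases h0 : f ^ n - 1 = 0
  · exact ⟨0, by linear_combination h0⟩
  · obtain ⟨g, hg⟩ : (X ^ p - X : (ZMod p)[X]) ∣ f ^ n - 1 := by
      refine hsplit.dvd_of_roots_le_roots
        (FiniteField.X_pow_card_sub_X_ne_zero _ hp.one_lt) ?_
      rw [hroots, Multiset.le_iff_subset Finset.univ.nodup]
      intro x _
      rw [mem_roots h0]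
      simp [hall x]
    exact ⟨g, by linear_combination hg⟩

/-- The Stepanov-style argument: for `p ≥ 7` a separable monic quartic over `𝔽_p` does not take
only nonzero square values. -/
theorem not_forall_eval_pow_eq_one {p : ℕ} [Fact p.Prime] (hp7 : 7 ≤ p) {f : (ZMod p)[X]}
    (hdeg : f.natDegree = 4) (hcop : IsCoprime f (derivative f)) :
    ¬ ∀ x, f.eval x ^ (p / 2) = 1 := by
  intro hall
  have hp := (Fact.out : p.Prime)
  have hodd : 2 * (p / 2) + 1 = p := by
    have := hp.eq_two_or_odd
    omega
  obtain ⟨n, hn⟩ : ∃ n, p / 2 = n + 1 := ⟨p / 2 - 1, by omega⟩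
  obtain ⟨g, hg⟩ := exists_pow_eq_one_add_mul _ hall
  set D : (ZMod p)[X] := X ^ p - X with hD
  have hDdeg : D.natDegree = p := FiniteField.X_pow_card_sub_X_natDegree_eq _ hp.one_lt
  have hD0 : D ≠ 0 := FiniteField.X_pow_card_sub_X_ne_zero _ hp.one_lt
  have hDder : derivative D = -1 := by
    simp [hD, derivative_X_pow]
  have hf0 : f ≠ 0 := by
    rintro rfl
    simp at hdeg
  have hf'deg : (derivative f).natDegree ≤ 3 := by
    have := natDegree_derivative_le f
    omega
  -- A multiple of `f` of degree less than `4` vanishes.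
  have hsmall : ∀ u : (ZMod p)[X], f ∣ u → u.natDegree < 4 → u = 0 := fun u hu hlt =>
    eq_zero_of_dvd_of_natDegree_lt hu (hdeg ▸ hlt)
  have hgdeg : g.natDegree + 2 ≤ p := by
    by_cases hg0 : g = 0
    · rw [hg0, natDegree_zero]
      omega
    · have h1 : (D * g).natDegree = p + g.natDegree := by rw [natDegree_mul hD0 hg0, hDdeg]
      have h2 : (D * g).natDegree ≤ p / 2 * 4 := by
        rw [show D * g = f ^ (p / 2) - 1 by rw [hg]; ring]
        refine (natDegree_sub_le _ _).trans ?_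
        rw [natDegree_pow, hdeg]
        simp
      omega
  -- The exponent `p / 2` equals `-1 / 2` in characteristic `p`.
  have hhalf : (2 : (ZMod p)[X]) * ((n : (ZMod p)[X]) + 1) = -1 := by
    have h : ((2 * (p / 2) + 1 : ℕ) : (ZMod p)[X]) = 0 := by
      rw [hodd]
      exact CharP.cast_eq_zero _ p
    rw [hn] at h
    push_cast at h
    linear_combination h
  -- This is `2 f F' = -f' F` for `F = f ^ (p / 2) = 1 + D * g`.
  have hE1 : 2 * f * (-g + D * derivative g) = -derivative f * (1 + D * g) := by
    have h := congrArg derivative hg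
    rw [hn, derivative_pow_succ] at h
    simp only [derivative_mul, derivative_one, hDder, map_add, map_one,
      map_natCast] at h
    rw [hn] at hg
    linear_combination (-2 * f) * h + derivative f * f ^ (n + 1) * hhalf - derivative f * hg
  set h : (ZMod p)[X] := derivative f * g + 2 * f * derivative g with hh
  have hE2 : 2 * f * g - derivative f = D * h := by
    rw [hh]
    linear_combination -hE1
  have hhdeg : h.natDegree ≤ 2 := by
    by_cases hh0 : h = 0
    · rw [hh0, natDegree_zero]
      omega
    · have h1 : (D * h).natDegree = p + h.natDegree := by rw [natDegree_mul hD0 hh0, hDdeg]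
      have h2 : (D * h).natDegree ≤ p + 2 := by
        rw [← hE2]
        compute_degree
        omega
      omega
  have hE3 : D * (derivative f * h - 2 * f * derivative h)
      = 2 * f * derivative (derivative f) - derivative f ^ 2 - 4 * f * h := by
    have h2 := congrArg derivative hE2
    simp only [derivative_sub, derivative_mul, hDder, derivative_ofNat] at h2
    linear_combination (-derivative f) * hE2 + 2 * f * h2 + 4 * f * hh
  have hf''deg : (derivative (derivative f)).natDegree ≤ 2 := by
    have := natDegree_derivative_le (derivative f)
    omega
  have hk : derivative f * h - 2 * f * derivative h = 0 := by
    by_contra hk0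
    have h1 := natDegree_mul hD0 hk0
    have h2 : (D * (derivative f * h - 2 * f * derivative h)).natDegree ≤ 6 := by
      rw [hE3]
      compute_degree
      omega
    omega
  have hh0 : h = 0 := by
    refine hsmall h (hcop.dvd_of_dvd_mul_left ⟨2 * derivative h, ?_⟩) (by omega)
    linear_combination hk
  have hf' : derivative f = 0 := by
    refine hsmall _ ⟨2 * g, ?_⟩ (by omega)
    rw [hh0] at hE2
    linear_combination -hE2
  rw [hf', isCoprime_zero_right] at hcop
  have := natDegree_eq_zero_of_isUnit hcop
  omega

/-- The case `p = 3`: a monic quartic over `𝔽_3` taking only nonzero square values is inseparable. -/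
theorem quartic_zmod_three : ∀ b c d e : ZMod 3,
    (∀ x : ZMod 3, (x ^ 4 + b * x ^ 3 + c * x ^ 2 + d * x + e) ^ 1 = 1) →
    256 * e ^ 3 - 192 * b * d * e ^ 2 - 128 * c ^ 2 * e ^ 2 + 144 * c * d ^ 2 * e -
        27 * d ^ 4 + 144 * b ^ 2 * c * e ^ 2 - 6 * b ^ 2 * d ^ 2 * e - 80 * b * c ^ 2 * d * e +
        18 * b * c * d ^ 3 + 16 * c ^ 4 * e - 4 * c ^ 3 * d ^ 2 - 27 * b ^ 4 * e ^ 2 +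
        18 * b ^ 3 * c * d * e - 4 * b ^ 3 * d ^ 3 - 4 * b ^ 2 * c ^ 3 * e +
        b ^ 2 * c ^ 2 * d ^ 2 = 0 := by
  decide +kernel

/-- The case `p = 5`: a monic quartic over `𝔽_5` taking only nonzero square values is inseparable. -/
theorem quartic_zmod_five : ∀ b c d e : ZMod 5,
    (∀ x : ZMod 5, (x ^ 4 + b * x ^ 3 + c * x ^ 2 + d * x + e) ^ 2 = 1) →
    256 * e ^ 3 - 192 * b * d * e ^ 2 - 128 * c ^ 2 * e ^ 2 + 144 * c * d ^ 2 * e -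
        27 * d ^ 4 + 144 * b ^ 2 * c * e ^ 2 - 6 * b ^ 2 * d ^ 2 * e - 80 * b * c ^ 2 * d * e +
        18 * b * c * d ^ 3 + 16 * c ^ 4 * e - 4 * c ^ 3 * d ^ 2 - 27 * b ^ 4 * e ^ 2 +
        18 * b ^ 3 * c * d * e - 4 * b ^ 3 * d ^ 3 - 4 * b ^ 2 * c ^ 3 * e +
        b ^ 2 * c ^ 2 * d ^ 2 = 0 := by
  decide +kernel

theorem eval_map_quartic {f : ℤ[X]} (hm : f.Monic) (hdeg : f.natDegree = 4)
    {R : Type*} [CommRing R] (x : R) :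
    (f.map (Int.castRingHom R)).eval x
      = x ^ 4 + f.coeff 3 * x ^ 3 + f.coeff 2 * x ^ 2 + f.coeff 1 * x + f.coeff 0 := by
  conv_lhs => rw [eq_quartic hm hdeg]
  simp

/-- The genus-one curve `q y² = f(x)` with `q` a nonsquare has a point over `𝔽_p`: some value of
`f` is zero or a nonsquare. -/
theorem exists_eval_zero_or_not_isSquare {p : ℕ} [Fact p.Prime] (hp2 : p ≠ 2) {f : ℤ[X]}
    (hm : f.Monic) (hdeg : f.natDegree = 4) (hdisc : (quarticDisc f : ZMod p) ≠ 0) :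
    ∃ a : ℤ, ((f.eval a : ℤ) : ZMod p) = 0 ∨ ¬ IsSquare ((f.eval a : ℤ) : ZMod p) := by
  by_contra! hcon
  have hall : ∀ x : ZMod p, (f.map (Int.castRingHom (ZMod p))).eval x ^ (p / 2) = 1 := by
    intro x
    obtain ⟨a, rfl⟩ := ZMod.intCast_surjective x
    have hev : (f.map (Int.castRingHom (ZMod p))).eval (a : ZMod p)
        = ((f.eval a : ℤ) : ZMod p) := by simp
    rw [hev]
    exact (ZMod.euler_criterion p (hcon a).1).1 (hcon a).2
  rcases le_or_gt 7 p with h7 | h7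
  · exact not_forall_eval_pow_eq_one h7 (by rw [hm.natDegree_map, hdeg])
      (isCoprime_map_derivative hm hdeg hdisc) hall
  · have hp := (Fact.out : p.Prime)
    simp only [eval_map_quartic hm hdeg] at hall
    interval_cases p
    · exact absurd hp (by norm_num)
    · exact absurd hp (by norm_num)
    · exact hp2 rfl
    · refine hdisc ?_
      simpa [quarticDisc] using quartic_zmod_three _ _ _ _ hall
    · exact absurd hp (by norm_num)
    · refine hdisc ?_
      simpa [quarticDisc] using quartic_zmod_five _ _ _ _ hall
    · exact absurd hp (by norm_num)

/-! ### Lifting to the `p`-adic numbers -/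

/-- Hensel's lemma for a simple root mod `p` of an integer polynomial, stated over `ℚ_p`. -/
theorem exists_padic_root {p : ℕ} [Fact p.Prime] (F : ℤ[X]) (a : ℤ)
    (h0 : ((F.eval a : ℤ) : ZMod p) = 0) (h1 : (((derivative F).eval a : ℤ) : ZMod p) ≠ 0) :
    ∃ z : ℚ_[p], (F.map (Int.castRingHom ℚ_[p])).eval z = 0 := by
  have hcast : ∀ G : ℤ[X], aeval (a : ℤ_[p]) G = ((G.eval a : ℤ) : ℤ_[p]) := fun G => by
    simp [aeval_def, eval₂_eq_eval_map]
  rw [ne_eq, ZMod.intCast_zmod_eq_zero_iff_dvd, ← PadicInt.norm_int_lt_one_iff_dvd, not_lt] at h1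
  rw [ZMod.intCast_zmod_eq_zero_iff_dvd, ← PadicInt.norm_int_lt_one_iff_dvd] at h0
  have h2 := le_antisymm (PadicInt.norm_le_one _) h1
  obtain ⟨z, hz, -⟩ := hensels_lemma (p := p) (F := F) (a := (a : ℤ_[p]))
    (by rw [hcast, hcast, h2, one_pow]; exact h0)
  refine ⟨z, ?_⟩
  rw [← eval₂_eq_eval_map]
  have hcomp : Int.castRingHom ℚ_[p]
      = (PadicInt.Coe.ringHom (p := p)).comp (algebraMap ℤ ℤ_[p]) := RingHom.ext_int _ _
  rw [hcomp]
  change eval₂ _ (PadicInt.Coe.ringHom z) F = 0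
  rw [← hom_eval₂, ← aeval_def, hz, map_zero]

theorem isSquare_padic_of_zmod {p : ℕ} [Fact p.Prime] (hp2 : p ≠ 2) {u : ℤ}
    (hu : (u : ZMod p) ≠ 0) (hsq : IsSquare (u : ZMod p)) : IsSquare (u : ℚ_[p]) := by
  obtain ⟨s, hs⟩ := hsq
  obtain ⟨s, rfl⟩ := ZMod.intCast_surjective s
  have h2 : ((2 : ℤ) : ZMod p) ≠ 0 := by
    rw [ne_eq, ZMod.intCast_zmod_eq_zero_iff_dvd]
    intro h
    exact hp2 ((Nat.prime_dvd_prime_iff_eq Fact.out Nat.prime_two).1 (by exact_mod_cast h))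
  have hs0 : (s : ZMod p) ≠ 0 := fun h => hu (by rw [hs, h, zero_mul])
  obtain ⟨z, hz⟩ := exists_padic_root (p := p) (X ^ 2 - C u) s
    (by simp [hs, pow_two])
    (by
      simp only [derivative_sub, derivative_X_pow, derivative_C, sub_zero]
      simpa using ⟨by simpa using h2, hs0⟩)
  refine ⟨z, ?_⟩
  simp at hz
  linear_combination -hz

theorem locallySolvableAt_of_root {p : ℕ} [Fact p.Prime] {f : ℤ[X]} (hm : f.Monic)
    (hdeg : f.natDegree = 4) (hdisc : (quarticDisc f : ZMod p) ≠ 0) (q a : ℤ)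
    (h0 : ((f.eval a : ℤ) : ZMod p) = 0) : LocallySolvableAt f q p := by
  obtain ⟨z, hz⟩ := exists_padic_root f a h0 (by
    intro h1
    obtain ⟨A, B, hAB⟩ := exists_bezout_map hm hdeg (R := ZMod p)
    have h := congrArg (eval (a : ZMod p)) hAB
    rw [derivative_map] at h
    simp [h0, h1] at h
    exact hdisc h.symm)
  exact Or.inl ⟨z, 0, by rw [hz]; ring⟩

/-- Local solvability at the primes of good reduction of `q y² = f(x)`. -/
theorem locallySolvableAt_of_good {p : ℕ} [Fact p.Prime] (hp2 : p ≠ 2) {f : ℤ[X]} (hm : f.Monic)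
    (hdeg : f.natDegree = 4) (hdisc : (quarticDisc f : ZMod p) ≠ 0) {q : ℤ}
    (hq : (q : ZMod p) ≠ 0) : LocallySolvableAt f q p := by
  by_cases hqs : IsSquare (q : ZMod p)
  · exact Or.inr (isSquare_padic_of_zmod hp2 hq hqs)
  obtain ⟨a, ha⟩ := exists_eval_zero_or_not_isSquare hp2 hm hdeg hdisc
  by_cases h0 : ((f.eval a : ℤ) : ZMod p) = 0
  · exact locallySolvableAt_of_root hm hdeg hdisc q a h0
  have hns := ha.resolve_left h0
  -- A product of two nonsquares of a finite field is a square.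
  have hprod : IsSquare ((q * f.eval a : ℤ) : ZMod p) := by
    have hq0 : quadraticChar (ZMod p) (q : ZMod p) = -1 :=
      quadraticChar_neg_one_iff_not_isSquare.2 hqs
    have hf0 : quadraticChar (ZMod p) ((f.eval a : ℤ) : ZMod p) = -1 :=
      quadraticChar_neg_one_iff_not_isSquare.2 hns
    rw [Int.cast_mul, ← quadraticChar_one_iff_isSquare (mul_ne_zero hq h0), map_mul, hq0, hf0]
    norm_num
  obtain ⟨s, hs⟩ := isSquare_padic_of_zmod hp2
    (by rw [Int.cast_mul]; exact mul_ne_zero hq h0) hprod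
  have hqp : (q : ℚ_[p]) ≠ 0 := by
    rintro h
    exact hq (by rw [Int.cast_eq_zero.1 h, Int.cast_zero])
  refine Or.inl ⟨a, s / q, ?_⟩
  have hev : (f.map (Int.castRingHom ℚ_[p])).eval (a : ℚ_[p]) = ((f.eval a : ℤ) : ℚ_[p]) := by
    simp
  rw [hev]
  push_cast at hs
  field_simp
  linear_combination -hs

/-! ### The real place and the conclusion -/

theorem exists_real_point {f : ℤ[X]} (hm : f.Monic) (hdeg : f.natDegree = 4) {q : ℤ}
    (hq : 0 < q) : ∃ x y : ℝ, (q : ℝ) * y ^ 2 = (f.map (Int.castRingHom ℝ)).eval x := by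
  have hq' : (0 : ℝ) < q := by exact_mod_cast hq
  have hmR := hm.map (Int.castRingHom ℝ)
  have hlim := tendsto_atTop_of_leadingCoeff_nonneg (f.map (Int.castRingHom ℝ))
    (natDegree_pos_iff_degree_pos.1 (by rw [hm.natDegree_map, hdeg]; norm_num))
    (by rw [hmR.leadingCoeff]; norm_num)
  obtain ⟨x, hx⟩ := (hlim.eventually_ge_atTop 0).exists
  refine ⟨x, √((f.map (Int.castRingHom ℝ)).eval x / q), ?_⟩
  rw [Real.sq_sqrt (div_nonneg hx hq'.le)]
  field_simp

/-- a positive squarefree `q` such that `f` has a root mod every prime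
`p ∣ q` with `p ∤ 2·disc f`, and such that `H_q` is locally solvable at every prime
dividing `2·disc f`, gives an everywhere locally solvable `H_q`. -/
theorem statement4 (f : Polynomial ℤ) (hmonic : f.Monic) (hirr : Irreducible f)
    (hdeg : f.natDegree = 4) (q : ℤ) (hqpos : 0 < q) (hqsf : Squarefree q)
    (ha : ∀ p : ℕ, p.Prime → (p : ℤ) ∣ q → ¬ (p : ℤ) ∣ 2 * quarticDisc f →
      ∃ x₀ : ZMod p, (f.map (Int.castRingHom (ZMod p))).eval x₀ = 0)
    (hb : ∀ (p : ℕ) [Fact p.Prime], (p : ℤ) ∣ 2 * quarticDisc f →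
      LocallySolvableAt f q p) :
    EverywhereLocallySolvable f q := by
  refine ⟨exists_real_point hmonic hdeg hqpos, fun p hp => ?_⟩
  by_cases hbad : (p : ℤ) ∣ 2 * quarticDisc f
  · exact hb p hbad
  have hp2 : p ≠ 2 := by
    rintro rfl
    exact hbad (dvd_mul_right _ _)
  have hdisc : (quarticDisc f : ZMod p) ≠ 0 := by
    rw [ne_eq, ZMod.intCast_zmod_eq_zero_iff_dvd]
    exact fun h => hbad (h.mul_left 2)
  by_cases hpq : (p : ℤ) ∣ q
  · obtain ⟨x, hx⟩ := ha p hp.out hpq hbad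
    obtain ⟨a, rfl⟩ := ZMod.intCast_surjective x
    exact locallySolvableAt_of_root hmonic hdeg hdisc q a (by simpa using hx)
  · exact locallySolvableAt_of_good hp2 hmonic hdeg hdisc
      (by rwa [ne_eq, ZMod.intCast_zmod_eq_zero_iff_dvd])
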